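/- (Correctness of dominance rule 1.) Assume the items are sorted by color, i.e. κ : {1,…,n} → {1,…,m} is monotone nondecreasing. Let i ∈ {1,…,n} and let S₁, S₂ ⊆ {1,…,i} satisfy |S₁| ≥ |S₂|, k̄(S₁) ≤ k̄(S₂), k_{κ_i}(S₁) ≤ k_{κ_i}(S₂), w(S₁) ≤ w(S₂), and p(S₁) ≥ p(S₂). Then for every T ⊆ {i+1,…,n} such that S₂ ∪ T is CKP-feasible, the set S₁ ∪ T is also CKP-feasible and p(S₁ ∪ T) ≥ p(S₂ ∪ T). -/

import Mathlib

/-!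
Let `T` be disjoint from `S₁` and `S₂`. Sizes, weights and profits are then additive, so only the
color constraint needs an argument, and since it says `2 k̄(S) ≤ |S| + 1`, it is enough to show
`k̄(S₁ ∪ T) ≤ k̄(S₂ ∪ T)`. A color occurring in only one of `S₁` and `T` is counted at most `k̄(S₁)`
or `k̄(T)` times in `S₁ ∪ T`. Because the items are sorted by color, the only color that can occur
in both is the current one, `κ i`, and there the two counts are compared directly.
-/

/-- A set `S` is CKP-feasible if `w(S) ≤ b` and the color constraint
`k_c(S) ≤ (|S| − k_c(S)) + 1` holds for every color `c`. -/
def ckpFeasible (m : ℕ) (κ : ℕ → Fin m) (w : ℕ → ℤ) (b : ℤ) (S : Finset ℕ) : Prop :=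
  (∑ j ∈ S, w j) ≤ b ∧
  ∀ c : Fin m, (S.filter fun j => κ j = c).card
    ≤ (S.card - (S.filter fun j => κ j = c).card) + 1

lemma sum_union_le_sum_union_of_disjoint {α M : Type*} [DecidableEq α] [AddCommMonoid M]
    [Preorder M] [AddRightMono M] {f : α → M} {S S' T : Finset α}
    (hd : Disjoint S T) (hd' : Disjoint S' T) (h : ∑ j ∈ S, f j ≤ ∑ j ∈ S', f j) :
    ∑ j ∈ S ∪ T, f j ≤ ∑ j ∈ S' ∪ T, f j := by
  rw [Finset.sum_union hd, Finset.sum_union hd']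
  gcongr

lemma card_union_le_card_union_of_disjoint {α : Type*} [DecidableEq α] {S S' T : Finset α}
    (hd : Disjoint S' T) (h : S.card ≤ S'.card) : (S ∪ T).card ≤ (S' ∪ T).card := by
  rw [Finset.card_union_of_disjoint hd]
  exact (Finset.card_union_le S T).trans (Nat.add_le_add_right h _)

lemma eq_of_monotoneOn_of_le_of_le {α β : Type*} [Preorder α] [PartialOrder β] {f : α → β}
    {A : Set α} (hf : MonotoneOn f A) {x y z : α} (hx : x ∈ A) (hy : y ∈ A) (hz : z ∈ A)
    (hxy : x ≤ y) (hyz : y ≤ z) (hxz : f x = f z) : f x = f y :=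
  (hf hx hy hxy).antisymm ((hf hy hz hyz).trans_eq hxz.symm)

lemma disjoint_Icc_Icc_succ (a i n : ℕ) : Disjoint (Finset.Icc a i) (Finset.Icc (i + 1) n) :=
  Finset.disjoint_left.2 fun _ hj hj' => by
    rw [Finset.mem_Icc] at hj hj'
    omega

lemma eq_of_monotoneOn_of_mem_Icc_of_mem_Icc_succ {β : Type*} [PartialOrder β] {f : ℕ → β}
    {a n i s t : ℕ} (hf : MonotoneOn f (Set.Icc a n)) (hs : s ∈ Finset.Icc a i)
    (ht : t ∈ Finset.Icc (i + 1) n) (hst : f s = f t) : f s = f i := by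
  rw [Finset.mem_Icc] at hs ht
  exact eq_of_monotoneOn_of_le_of_le hf ⟨hs.1, by omega⟩ ⟨by omega, by omega⟩ ⟨by omega, ht.2⟩
    hs.2 (by omega) hst

section ColorCount

open Finset

variable {α C : Type*} [DecidableEq C] {κ : α → C} {S S' S₁ S₂ T : Finset α} {c c₀ : C}

/-- The number `k_c(S)` of items of color `c` in `S`. -/
def colorCount (κ : α → C) (S : Finset α) (c : C) : ℕ :=
  #{j ∈ S | κ j = c}

/-- The largest number `k̄(S)` of items of one color in `S`. The maximum runs over the colors that
occur in `S`, so that the set of colors may be infinite. -/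
def maxColorCount (κ : α → C) (S : Finset α) : ℕ :=
  S.sup fun j => colorCount κ S (κ j)

/-- The color constraint of the colored knapsack problem, with the same natural-number
subtraction as in `ckpFeasible`; it never truncates because `k_c(S) ≤ |S|`. -/
def IsColorBalanced (κ : α → C) (S : Finset α) : Prop :=
  ∀ c, colorCount κ S c ≤ (#S - colorCount κ S c) + 1

lemma colorCount_eq_zero_iff : colorCount κ S c = 0 ↔ ∀ j ∈ S, κ j ≠ c := by
  simp [colorCount, filter_eq_empty_iff]

lemma colorCount_le_card : colorCount κ S c ≤ #S :=
  card_filter_le S _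

lemma colorCount_mono (h : S ⊆ S') : colorCount κ S c ≤ colorCount κ S' c :=
  card_le_card (filter_subset_filter _ h)

lemma colorCount_union_of_disjoint [DecidableEq α] (h : Disjoint S T) :
    colorCount κ (S ∪ T) c = colorCount κ S c + colorCount κ T c := by
  rw [colorCount, filter_union, card_union_of_disjoint (disjoint_filter_filter h)]
  rfl

lemma colorCount_le_maxColorCount : colorCount κ S c ≤ maxColorCount κ S := by
  by_cases hc : ∃ j ∈ S, κ j = c
  · obtain ⟨j, hj, rfl⟩ := hc
    exact le_sup (f := fun j => colorCount κ S (κ j)) hj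
  · push Not at hc
    exact (colorCount_eq_zero_iff.2 hc).trans_le (Nat.zero_le _)

lemma maxColorCount_le_iff {k : ℕ} : maxColorCount κ S ≤ k ↔ ∀ c, colorCount κ S c ≤ k :=
  ⟨fun h _ => colorCount_le_maxColorCount.trans h, fun h => Finset.sup_le fun _ _ => h _⟩

lemma maxColorCount_mono (h : S ⊆ S') : maxColorCount κ S ≤ maxColorCount κ S' :=
  maxColorCount_le_iff.2 fun _ => (colorCount_mono h).trans colorCount_le_maxColorCount

lemma maxColorCount_eq_sup_univ [Fintype C] : maxColorCount κ S = univ.sup (colorCount κ S) :=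
  eq_of_forall_ge_iff fun k => by simp [maxColorCount_le_iff]

lemma isColorBalanced_iff_two_mul_maxColorCount_le :
    IsColorBalanced κ S ↔ 2 * maxColorCount κ S ≤ #S + 1 := by
  have hcount (c : C) : colorCount κ S c ≤ (#S - colorCount κ S c) + 1 ↔
      colorCount κ S c ≤ (#S + 1) / 2 := by
    have := colorCount_le_card (κ := κ) (S := S) (c := c)
    omega
  rw [IsColorBalanced, forall_congr' hcount, ← maxColorCount_le_iff]
  omega

lemma IsColorBalanced.of_maxColorCount_le (h : IsColorBalanced κ S)
    (hmax : maxColorCount κ S' ≤ maxColorCount κ S) (hcard : #S ≤ #S') :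
    IsColorBalanced κ S' := by
  rw [isColorBalanced_iff_two_mul_maxColorCount_le] at h ⊢
  omega

lemma maxColorCount_union_le_maxColorCount_union [DecidableEq α] (hd₁ : Disjoint S₁ T)
    (hd₂ : Disjoint S₂ T) (hshared : ∀ s ∈ S₁, ∀ t ∈ T, κ s = κ t → κ s = c₀)
    (hmax : maxColorCount κ S₁ ≤ maxColorCount κ S₂)
    (hcur : colorCount κ S₁ c₀ ≤ colorCount κ S₂ c₀) :
    maxColorCount κ (S₁ ∪ T) ≤ maxColorCount κ (S₂ ∪ T) := by
  refine maxColorCount_le_iff.2 fun c => ?_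
  rw [colorCount_union_of_disjoint hd₁]
  by_cases hS : ∀ s ∈ S₁, κ s ≠ c
  · rw [colorCount_eq_zero_iff.2 hS, zero_add]
    exact colorCount_le_maxColorCount.trans (maxColorCount_mono subset_union_right)
  by_cases hT : ∀ t ∈ T, κ t ≠ c
  · rw [colorCount_eq_zero_iff.2 hT, add_zero]
    calc colorCount κ S₁ c ≤ maxColorCount κ S₁ := colorCount_le_maxColorCount
      _ ≤ maxColorCount κ S₂ := hmax
      _ ≤ maxColorCount κ (S₂ ∪ T) := maxColorCount_mono subset_union_left
  push Not at hS hT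
  obtain ⟨s, hs, rfl⟩ := hS
  obtain ⟨t, ht, hts⟩ := hT
  rw [hshared s hs t ht hts.symm]
  calc colorCount κ S₁ c₀ + colorCount κ T c₀
      ≤ colorCount κ S₂ c₀ + colorCount κ T c₀ := Nat.add_le_add_right hcur _
    _ = colorCount κ (S₂ ∪ T) c₀ := (colorCount_union_of_disjoint hd₂).symm
    _ ≤ maxColorCount κ (S₂ ∪ T) := colorCount_le_maxColorCount

end ColorCount

/-- The color `c₀` plays the part of the current color `κ i`: when the items are sorted by color, it
is the only one that `S₁` and `T` can share. -/
theorem dominance_rule_one_correct_general {α C M N : Type*} [DecidableEq α] [DecidableEq C]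
    [AddCommMonoid M] [Preorder M] [AddRightMono M]
    [AddCommMonoid N] [Preorder N] [AddRightMono N]
    {κ : α → C} {w : α → M} {p : α → N} {b : M} {c₀ : C} {S₁ S₂ T : Finset α}
    (hd₁ : Disjoint S₁ T) (hd₂ : Disjoint S₂ T)
    (hshared : ∀ s ∈ S₁, ∀ t ∈ T, κ s = κ t → κ s = c₀)
    (hcard : S₂.card ≤ S₁.card) (hmax : maxColorCount κ S₁ ≤ maxColorCount κ S₂)
    (hcur : colorCount κ S₁ c₀ ≤ colorCount κ S₂ c₀)
    (hweight : ∑ j ∈ S₁, w j ≤ ∑ j ∈ S₂, w j) (hprofit : ∑ j ∈ S₂, p j ≤ ∑ j ∈ S₁, p j)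
    (hfeas : ∑ j ∈ S₂ ∪ T, w j ≤ b ∧ IsColorBalanced κ (S₂ ∪ T)) :
    (∑ j ∈ S₁ ∪ T, w j ≤ b ∧ IsColorBalanced κ (S₁ ∪ T)) ∧
      ∑ j ∈ S₂ ∪ T, p j ≤ ∑ j ∈ S₁ ∪ T, p j := by
  obtain ⟨hcap, hbal⟩ := hfeas
  refine ⟨⟨?capacity, ?color⟩, ?profit⟩
  case capacity => exact (sum_union_le_sum_union_of_disjoint hd₁ hd₂ hweight).trans hcap
  case color =>
    exact hbal.of_maxColorCount_le
      (maxColorCount_union_le_maxColorCount_union hd₁ hd₂ hshared hmax hcur)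
      (card_union_le_card_union_of_disjoint hd₁ hcard)
  case profit => exact sum_union_le_sum_union_of_disjoint hd₂ hd₁ hprofit

/-- correctness of dominance rule 1: Assume the items `{1,…,n}` are sorted
by color (`κ` is monotone nondecreasing on `{1,…,n}`). Let `S₁, S₂ ⊆ {1,…,i}` with
`|S₁| ≥ |S₂|`, `k̄(S₁) ≤ k̄(S₂)`, `k_{κ i}(S₁) ≤ k_{κ i}(S₂)`, `w(S₁) ≤ w(S₂)`, and
`p(S₁) ≥ p(S₂)`. Then for every `T ⊆ {i+1,…,n}` such that `S₂ ∪ T` is CKP-feasible, the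
set `S₁ ∪ T` is also CKP-feasible and `p(S₁ ∪ T) ≥ p(S₂ ∪ T)`. -/
theorem dominance_rule_one_correct (n m : ℕ) (w p : ℕ → ℤ) (b : ℤ) (κ : ℕ → Fin m)
    (hw : ∀ j ∈ Finset.Icc 1 n, 0 < w j) (hb : 0 < b)
    (hmono : MonotoneOn κ (Set.Icc 1 n))
    (i : ℕ) (hi1 : 1 ≤ i) (hin : i ≤ n)
    (S₁ S₂ : Finset ℕ) (hS₁ : S₁ ⊆ Finset.Icc 1 i) (hS₂ : S₂ ⊆ Finset.Icc 1 i)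
    (hcard : S₂.card ≤ S₁.card)
    (hdom : (Finset.univ.sup fun c : Fin m => (S₁.filter fun j => κ j = c).card)
      ≤ Finset.univ.sup fun c : Fin m => (S₂.filter fun j => κ j = c).card)
    (hcur : (S₁.filter fun j => κ j = κ i).card ≤ (S₂.filter fun j => κ j = κ i).card)
    (hweight : (∑ j ∈ S₁, w j) ≤ ∑ j ∈ S₂, w j)
    (hprofit : (∑ j ∈ S₂, p j) ≤ ∑ j ∈ S₁, p j) :
    ∀ T ⊆ Finset.Icc (i + 1) n,
      ckpFeasible m κ w b (S₂ ∪ T) →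
      ckpFeasible m κ w b (S₁ ∪ T) ∧ (∑ j ∈ S₂ ∪ T, p j) ≤ ∑ j ∈ S₁ ∪ T, p j := by
  intro T hT hfeas
  have hdisj : Disjoint (Finset.Icc 1 i) T := (disjoint_Icc_Icc_succ 1 i n).mono_right hT
  have hmax : maxColorCount κ S₁ ≤ maxColorCount κ S₂ := by
    rw [maxColorCount_eq_sup_univ, maxColorCount_eq_sup_univ]
    exact hdom
  exact dominance_rule_one_correct_general (hdisj.mono_left hS₁) (hdisj.mono_left hS₂)
    (fun _ hs _ ht => eq_of_monotoneOn_of_mem_Icc_of_mem_Icc_succ hmono (hS₁ hs) (hT ht))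
    hcard hmax hcur hweight hprofit hfeas
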